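/- arXiv:1205.4821 — 2 statements merged into one kernel-verified Lean document; each statement's English description precedes it below -/
import Mathlib

section
/- Let α be a real number with 1 − log 2/log 3 ≤ α ≤ 1. There exists a closed set F ⊆ ℝ with Hausdorff dimension at most α such that for every r ∈ [0,1], the (α − 1 + log 2/log 3)-dimensional Hausdorff measure of (𝒞 + r) ∩ F is strictly positive. -/
open MeasureTheory
open scoped ENNReal

/-- The middle-thirds Cantor set: reals admitting a ternary expansion
`∑_{n≥1} aₙ 3⁻ⁿ` with every digit `aₙ ∈ {0, 2}`. -/
def ternaryCantorSet : Set ℝ :=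
  {x | ∃ a : ℕ → ℝ, (∀ n, a n = 0 ∨ a n = 2) ∧ x = ∑' n : ℕ, a n / 3 ^ (n + 1)}

namespace CantorTr

def T (a : ℕ → ℕ) : ℕ → ℕ
  | 0 => 0
  | (k+1) => 3 * T a k + a k

lemma T_add (a : ℕ → ℕ) (N n : ℕ) :
    T a (N + n) = 3 ^ n * T a N + T (fun i => a (N + i)) n := by
  induction n with
  | zero => simp [T]
  | succ n ih => rw [← add_assoc]; simp only [T]; rw [ih]; ring

lemma T_sum (a b : ℕ → ℕ) (n : ℕ) : T (fun i => a i + b i) n = T a n + T b n := by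
  induction n with
  | zero => simp [T]
  | succ n ih => simp only [T]; rw [ih]; ring

lemma T_lt (a : ℕ → ℕ) (h : ∀ i, a i ≤ 2) (n : ℕ) : T a n < 3 ^ n := by
  induction n with
  | zero => simp [T]
  | succ n ih => simp only [T]; have := h n; rw [pow_succ]; omega

lemma T_congr (a b : ℕ → ℕ) (n : ℕ) (h : ∀ i < n, a i = b i) : T a n = T b n := by
  induction n with
  | zero => simp [T]
  | succ n ih =>
    simp only [T]
    rw [ih (fun i hi => h i (by omega)), h n (by omega)]

lemma exists_V (Q : ℕ → Prop) [DecidablePred Q] (n : ℕ) :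
    ∃ V : Finset ℕ, V.card = 2 ^ (Nat.count Q n) ∧ ∀ v ∈ V,
      ∃ w : ℕ → ℕ, (∀ i, w i = 0 ∨ w i = 2) ∧ (∀ i, ¬ Q i → w i = 0) ∧ v = T w n := by
  induction n with
  | zero =>
    refine ⟨{0}, by simp, fun v hv => ⟨fun _ => 0, by simp, by simp, ?_⟩⟩
    simpa [T] using hv
  | succ n ih =>
    obtain ⟨V, hc, hV⟩ := ih
    have i1 : Function.Injective (fun x : ℕ => 3 * x) := fun x y h => by
      simp only at h; omega
    have i2 : Function.Injective (fun x : ℕ => 3 * x + 2) := fun x y h => by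
      simp only at h; omega
    have key : ∀ v ∈ V, ∀ e : ℕ, (e = 0 ∨ e = 2) → (¬ Q n → e = 0) →
        ∃ w : ℕ → ℕ, (∀ i, w i = 0 ∨ w i = 2) ∧ (∀ i, ¬ Q i → w i = 0) ∧
          3 * v + e = T w (n+1) := by
      intro v hv e he heQ
      obtain ⟨w, h1, h2, h3⟩ := hV v hv
      refine ⟨Function.update w n e, ?_, ?_, ?_⟩
      · intro i
        by_cases hi : i = n
        · subst hi; simpa using he
        · simpa [Function.update_of_ne hi] using h1 i
      · intro i hQ
        by_cases hi : i = n
        · subst hi; simpa using heQ hQ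
        · simpa [Function.update_of_ne hi] using h2 i hQ
      · simp only [T, Function.update_self]
        rw [h3, T_congr w (Function.update w n e) n]
        intro i hi
        rw [Function.update_of_ne (by omega)]
    by_cases hQ : Q n
    · refine ⟨V.image (fun x => 3 * x) ∪ V.image (fun x => 3 * x + 2), ?_, ?_⟩
      · rw [Finset.card_union_of_disjoint, Finset.card_image_of_injective _ i1,
          Finset.card_image_of_injective _ i2, Nat.count_succ, hc]
        · simp [hQ, pow_succ]; ring
        · rw [Finset.disjoint_left]
          intro x hx hy
          simp only [Finset.mem_image] at hx hy
          obtain ⟨a, _, ha⟩ := hx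
          obtain ⟨b, _, hb⟩ := hy
          omega
      · intro v hv
        simp only [Finset.mem_union, Finset.mem_image] at hv
        rcases hv with ⟨x, hx, rfl⟩ | ⟨x, hx, rfl⟩
        · exact key x hx 0 (by simp) (by simp)
        · exact key x hx 2 (by simp) (fun h => absurd hQ h)
    · refine ⟨V.image (fun x => 3 * x), ?_, ?_⟩
      · rw [Finset.card_image_of_injective _ i1, Nat.count_succ, hc]
        simp [hQ]
      · intro v hv
        simp only [Finset.mem_image] at hv
        obtain ⟨x, hx, rfl⟩ := hv
        exact key x hx 0 (by simp) (by simp)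

lemma greedy_step (V U : Finset ℕ) (K : ℕ) (hK : 0 < K) (hV : ∀ v ∈ V, v < K)
    (hU : ∀ u ∈ U, u < 2 * K) :
    ∃ f : ℕ, (U.card * V.card : ℝ) / (3 * K) ≤ (U.filter (fun k => ∃ v ∈ V, k + v = f)).card := by
  by_contra! hcon
  have h1 : ∑ f ∈ Finset.range (3 * K), (U.filter (fun k => ∃ v ∈ V, k + v = f)).card
      = U.card * V.card := by
    have : ∀ f, (U.filter (fun k => ∃ v ∈ V, k + v = f)).card
        = ((U ×ˢ V).filter (fun p => p.1 + p.2 = f)).card := by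
      intro f
      symm
      apply Finset.card_bij (fun p _ => p.1)
      · intro p hp
        simp only [Finset.mem_filter, Finset.mem_product] at hp ⊢
        exact ⟨hp.1.1, p.2, hp.1.2, hp.2⟩
      · intro p hp q hq h
        simp only [Finset.mem_filter, Finset.mem_product] at hp hq
        ext
        · exact h
        · omega
      · intro k hk
        simp only [Finset.mem_filter] at hk
        obtain ⟨hk, v, hv, h⟩ := hk
        exact ⟨(k, v), by simp [hk, hv, h], rfl⟩
    simp_rw [this]
    rw [← Finset.card_product]
    symm
    apply Finset.card_eq_sum_card_fiberwise
    intro p hp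
    simp only [Finset.coe_product, Set.mem_prod, Finset.mem_coe] at hp
    have := hV _ hp.2
    have := hU _ hp.1
    simp only [Finset.coe_range, Set.mem_Iio]
    omega
  have h2 : ∑ f ∈ Finset.range (3 * K),
      ((U.filter (fun k => ∃ v ∈ V, k + v = f)).card : ℝ)
      < ∑ f ∈ Finset.range (3 * K), (U.card * V.card : ℝ) / (3 * K) := by
    apply Finset.sum_lt_sum_of_nonempty
    · exact ⟨0, by simp; omega⟩
    · intro f _; exact hcon f
  rw [← Nat.cast_sum, h1] at h2
  simp only [Finset.sum_const, Finset.card_range, nsmul_eq_mul] at h2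
  push_cast at h2
  have : (0:ℝ) < K := by exact_mod_cast hK
  rw [mul_div_cancel₀ _ (by positivity)] at h2
  exact lt_irrefl _ h2

lemma greedy (V : Finset ℕ) (K : ℕ) (hK : 0 < K) (hV : ∀ v ∈ V, v < K) (t : ℕ) :
    ∃ D : Finset ℕ, D.card ≤ t ∧
      (((Finset.range (2 * K)).filter (fun k => ¬ ∃ v ∈ V, k + v ∈ D)).card : ℝ) ≤
        2 * K * (1 - (V.card : ℝ) / (3 * K)) ^ t := by
  induction t with
  | zero =>
    refine ⟨∅, by simp, by simp⟩
  | succ t ih =>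
    obtain ⟨D, hD, hc⟩ := ih
    set U := (Finset.range (2 * K)).filter (fun k => ¬ ∃ v ∈ V, k + v ∈ D) with hUdef
    obtain ⟨f, hf⟩ := greedy_step V U K hK hV (fun u hu => by
      simp only [hUdef, Finset.mem_filter, Finset.mem_range] at hu; exact hu.1)
    refine ⟨insert f D, (Finset.card_insert_le _ _).trans (by omega), ?_⟩
    have hsub : (Finset.range (2 * K)).filter (fun k => ¬ ∃ v ∈ V, k + v ∈ insert f D)
        ⊆ U.filter (fun k => ¬ ∃ v ∈ V, k + v = f) := by
      intro k hk
      simp only [hUdef, Finset.mem_filter, Finset.mem_insert] at hk ⊢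
      refine ⟨⟨hk.1, ?_⟩, ?_⟩
      · rintro ⟨v, hv, h⟩; exact hk.2 ⟨v, hv, Or.inr h⟩
      · rintro ⟨v, hv, h⟩; exact hk.2 ⟨v, hv, Or.inl h⟩
    have h1 := Finset.card_le_card hsub
    have h2 := Finset.card_filter_add_card_filter_not (s := U) (fun k => ∃ v ∈ V, k + v = f)
    have hK' : (0:ℝ) < K := by exact_mod_cast hK
    have hVK : V.card ≤ K := by
      have : V ⊆ Finset.range K := fun v hv => by simpa using hV v hv
      simpa using Finset.card_le_card this
    have hVK' : (V.card : ℝ) ≤ K := by exact_mod_cast hVK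
    have h4 : (0:ℝ) ≤ 1 - (V.card : ℝ) / (3 * K) := by
      rw [sub_nonneg, div_le_one (by positivity)]; linarith
    have h2' : ((U.filter (fun k => ∃ v ∈ V, k + v = f)).card : ℝ) +
      (U.filter (fun k => ¬ ∃ v ∈ V, k + v = f)).card = U.card := by exact_mod_cast h2
    calc _ ≤ ((U.filter (fun k => ¬ ∃ v ∈ V, k + v = f)).card : ℝ) := by exact_mod_cast h1
      _ ≤ U.card - (U.card * V.card : ℝ) / (3 * K) := by linarith
      _ = U.card * (1 - (V.card : ℝ) / (3 * K)) := by ring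
      _ ≤ (2 * K * (1 - (V.card : ℝ) / (3 * K)) ^ t) * (1 - (V.card : ℝ) / (3 * K)) := by gcongr
      _ = _ := by ring

lemma exists_D (V : Finset ℕ) (n : ℕ) (hne : V.Nonempty) (hV : ∀ v ∈ V, v < 3 ^ n) :
    ∃ D : Finset ℕ, (D.card : ℝ) ≤ 7 * (n + 1) * (3 ^ n / V.card) ∧
      ∀ k < 2 * 3 ^ n, ∃ v ∈ V, k + v ∈ D := by
  have hK : 0 < 3 ^ n := by positivity
  set x : ℝ := 6 * (n + 1) * (3 ^ n / V.card) with hx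
  obtain ⟨D, hD, hc⟩ := greedy V (3 ^ n) hK hV ⌈x⌉₊
  have hcard : 0 < V.card := Finset.card_pos.2 hne
  have hVK : V.card ≤ 3 ^ n := by
    have : V ⊆ Finset.range (3 ^ n) := fun v hv => by simpa using hV v hv
    simpa using Finset.card_le_card this
  have hVK' : (V.card : ℝ) ≤ 3 ^ n := by exact_mod_cast hVK
  have hcard' : (0:ℝ) < V.card := by exact_mod_cast hcard
  have hx0 : 0 ≤ x := by positivity
  refine ⟨D, ?_, ?_⟩
  · have h1 : (D.card : ℝ) ≤ ⌈x⌉₊ := by exact_mod_cast hD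
    have h2 := (Nat.ceil_lt_add_one hx0).le
    have h3 : (1:ℝ) ≤ 3 ^ n / V.card := by rwa [one_le_div hcard']
    have : (1:ℝ) ≤ (n + 1) * (3 ^ n / V.card) := by
      have : (1:ℝ) ≤ n + 1 := by simp
      nlinarith
    calc (D.card : ℝ) ≤ x + 1 := h1.trans h2
      _ ≤ _ := by rw [hx]; linarith
  · have h0 : (((Finset.range (2 * 3 ^ n)).filter (fun k => ¬ ∃ v ∈ V, k + v ∈ D)).card : ℝ) < 1 := by
      refine hc.trans_lt ?_
      push_cast
      set δ : ℝ := V.card / (3 * 3 ^ n) with hδ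
      have hδ1 : 0 ≤ 1 - δ := by
        rw [sub_nonneg, hδ, div_le_one (by positivity)]
        have : (0:ℝ) < 3 ^ n := by positivity
        linarith
      have hδx : δ * x = 2 * (n + 1) := by rw [hδ, hx]; field_simp; norm_num
      have e1 : (1 - δ) ^ ⌈x⌉₊ ≤ Real.exp (-(2 * (n + 1))) := by
        calc (1 - δ) ^ ⌈x⌉₊ ≤ (Real.exp (-δ)) ^ ⌈x⌉₊ := by
              gcongr
              have := Real.add_one_le_exp (-δ); linarith
          _ = Real.exp (-(δ * ⌈x⌉₊)) := by rw [← Real.exp_nat_mul]; ring_nf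
          _ ≤ _ := by
              apply Real.exp_le_exp.2
              have : δ * x ≤ δ * ⌈x⌉₊ := by
                have := Nat.le_ceil x
                have : 0 ≤ δ := by positivity
                gcongr
              linarith
      have e2 : (3:ℝ) ^ (n+1) ≤ Real.exp (2 * (n + 1)) := by
        have : (3:ℝ) ≤ Real.exp 2 := by
          have := Real.add_one_le_exp (2:ℝ); linarith
        calc (3:ℝ) ^ (n+1) ≤ (Real.exp 2) ^ (n+1) := by gcongr
          _ = _ := by rw [← Real.exp_nat_mul]; push_cast; ring_nf
      rw [Real.exp_neg] at e1
      have h3 : (0:ℝ) < 3 ^ n := by positivity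
      calc 2 * 3 ^ n * (1 - δ) ^ ⌈x⌉₊ ≤ 2 * 3 ^ n * (Real.exp (2 * (n + 1)))⁻¹ := by gcongr
        _ ≤ 2 * 3 ^ n * ((3:ℝ) ^ (n+1))⁻¹ := by gcongr
        _ < 1 := by rw [pow_succ]; field_simp; norm_num
    have h1 : ((Finset.range (2 * 3 ^ n)).filter (fun k => ¬ ∃ v ∈ V, k + v ∈ D)).card = 0 := by
      have : ((Finset.range (2 * 3 ^ n)).filter (fun k => ¬ ∃ v ∈ V, k + v ∈ D)).card < 1 := by
        exact_mod_cast h0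
      omega
    rw [Finset.card_eq_zero, Finset.filter_eq_empty_iff] at h1
    intro k hk
    have := h1 (Finset.mem_range.2 hk)
    simpa using this

lemma exists_P (θ : ℝ) (h0 : 0 ≤ θ) (h1 : θ ≤ 1) :
    ∃ P : ℕ → Prop, ∃ _ : DecidablePred P, ∀ k, Nat.count P k = ⌈θ * k⌉₊ := by
  classical
  refine ⟨fun i => ⌈θ * i⌉₊ < ⌈θ * ((i + 1 : ℕ) : ℝ)⌉₊, inferInstance, fun k => ?_⟩
  induction k with
  | zero => simp
  | succ k ih =>
    rw [Nat.count_succ, ih]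
    have a1 : ⌈θ * k⌉₊ ≤ ⌈θ * ((k + 1 : ℕ) : ℝ)⌉₊ := by
      apply Nat.ceil_le_ceil; push_cast; nlinarith
    have a2 : ⌈θ * ((k + 1 : ℕ) : ℝ)⌉₊ ≤ ⌈θ * k⌉₊ + 1 := by
      apply Nat.ceil_le.2
      have := Nat.le_ceil (θ * k)
      push_cast; nlinarith
    split_ifs with h <;> omega

lemma block_D (α θ : ℝ) (h0 : 0 ≤ θ) (hα : (3:ℝ) ^ α = 3 * (2:ℝ) ^ (θ - 1))
    (P : ℕ → Prop) [DecidablePred P] (hP : ∀ k, Nat.count P k = ⌈θ * k⌉₊) (N n : ℕ) :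
    ∃ D : Finset ℕ, (D.card : ℝ) ≤ 14 * (n + 1) * ((3:ℝ) ^ α) ^ n ∧
      ∀ k < 2 * 3 ^ n, ∃ w : ℕ → ℕ, (∀ i, w i = 0 ∨ w i = 2) ∧
        (∀ i, P (N + i) → w i = 0) ∧ k + T w n ∈ D := by
  obtain ⟨V, hc, hV⟩ := exists_V (fun i => ¬ P (N + i)) n
  have hlt : ∀ v ∈ V, v < 3 ^ n := by
    intro v hv
    obtain ⟨w, h1, h2, rfl⟩ := hV v hv
    exact T_lt w (fun i => by rcases h1 i with h | h <;> omega) n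
  obtain ⟨D, hD, hk⟩ := exists_D V n (Finset.card_pos.1 (by rw [hc]; positivity)) hlt
  refine ⟨D, ?_, ?_⟩
  · refine hD.trans ?_
    have hpq : Nat.count (fun i => ¬ P (N + i)) n + Nat.count (fun i => P (N + i)) n = n := by
      have : ∀ n, Nat.count (fun i => ¬ P (N + i)) n + Nat.count (fun i => P (N + i)) n = n := by
        intro n
        induction n with
        | zero => simp
        | succ n ih =>
          rw [Nat.count_succ, Nat.count_succ]
          by_cases h : P (N + n) <;> simp [h] <;> omega
      exact this n
    have hadd := Nat.count_add P N n
    set q := Nat.count (fun i => ¬ P (N + i)) n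
    set p := Nat.count (fun i => P (N + i)) n
    have hp : (p : ℝ) ≤ θ * n + 1 := by
      rw [hP, hP] at hadd
      have b1 := Nat.le_ceil (θ * N)
      have b2 : (⌈θ * ((N + n : ℕ) : ℝ)⌉₊ : ℝ) < θ * ((N + n : ℕ) : ℝ) + 1 :=
        Nat.ceil_lt_add_one (by positivity)
      rw [hadd] at b2
      push_cast at b2
      linarith
    have hq : (n : ℝ) - (θ * n + 1) ≤ q := by
      have : (q : ℝ) + p = n := by exact_mod_cast hpq
      linarith
    have h2q : (2:ℝ) ^ ((n : ℝ) - (θ * n + 1)) ≤ (V.card : ℝ) := by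
      rw [hc]; push_cast
      rw [← Real.rpow_natCast]
      exact Real.rpow_le_rpow_of_exponent_le (by norm_num) hq
    have e : ((3:ℝ) ^ α) ^ n * (2:ℝ) ^ ((n : ℝ) - (θ * n + 1)) * 2 = 3 ^ n := by
      rw [hα, mul_pow, ← Real.rpow_natCast ((2:ℝ) ^ (θ - 1)), ← Real.rpow_mul (by norm_num), mul_assoc,
        mul_assoc]
      have : (2:ℝ) ^ ((θ - 1) * n) * ((2:ℝ) ^ ((n : ℝ) - (θ * n + 1)) * 2) = 1 := by
        nth_rewrite 3 [← Real.rpow_one 2]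
        rw [← Real.rpow_add (by norm_num), ← Real.rpow_add (by norm_num)]
        ring_nf; simp
      rw [this, mul_one]
    have hVpos : (0:ℝ) < V.card := lt_of_lt_of_le (by positivity) h2q
    have : (3:ℝ) ^ n / V.card ≤ 2 * ((3:ℝ) ^ α) ^ n := by
      rw [div_le_iff₀ hVpos, ← e]
      have : 0 ≤ ((3:ℝ) ^ α) ^ n := by positivity
      nlinarith
    calc 7 * ((n:ℝ) + 1) * (3 ^ n / V.card) ≤ 7 * ((n:ℝ) + 1) * (2 * ((3:ℝ) ^ α) ^ n) := by gcongr
      _ = _ := by ring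
  · intro k hkk
    obtain ⟨v, hv, hd⟩ := hk k hkk
    obtain ⟨w, h1, h2, rfl⟩ := hV v hv
    exact ⟨w, h1, fun i hi => h2 i (not_not.2 hi), hd⟩

noncomputable def cv (a : ℕ → ℕ) : ℝ := ∑' n : ℕ, (a n : ℝ) / 3 ^ (n + 1)

lemma cv_bounds (a : ℕ → ℕ) (ha : ∀ i, a i = 0 ∨ a i = 2) (N : ℕ) :
    (T a N : ℝ) / 3 ^ N ≤ cv a ∧ cv a ≤ (T a N + 1) / 3 ^ N := by
  have hcv : cv a = Real.ofDigits (fun i => Fin.ofNat 3 (a i)) := by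
    unfold cv Real.ofDigits Real.ofDigitsTerm
    congr 1; ext i
    rcases ha i with h | h <;> simp [h, div_eq_mul_inv]
  have hs : ∑ i ∈ Finset.range N, Real.ofDigitsTerm (fun i => Fin.ofNat 3 (a i)) i
      = (T a N : ℝ) / 3 ^ N := by
    induction N with
    | zero => simp [T]
    | succ N ih =>
      rw [Finset.sum_range_succ, ih]
      have : Real.ofDigitsTerm (fun i => Fin.ofNat 3 (a i)) N = (a N : ℝ) / 3 ^ (N+1) := by
        unfold Real.ofDigitsTerm
        rcases ha N with h | h <;> simp [h, div_eq_mul_inv]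
      rw [this]; simp only [T]; push_cast; field_simp; ring
  rw [hcv, Real.ofDigits_eq_sum_add_ofDigits _ N, hs]
  have l1 := Real.ofDigits_nonneg (fun i => Fin.ofNat 3 (a (i + N)))
  have l2 := Real.ofDigits_le_one (fun i => Fin.ofNat 3 (a (i + N)))
  have h3 : (0:ℝ) < ((3:ℝ) ^ N)⁻¹ := by positivity
  push_cast
  constructor
  · nlinarith
  · rw [add_div, one_div]; nlinarith

lemma cv_sep (a b : ℕ → ℕ) (ha : ∀ i, a i = 0 ∨ a i = 2) (hb : ∀ i, b i = 0 ∨ b i = 2) (k : ℕ)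
    (hlt : ∀ i < k, a i = b i) (hk : a k ≠ b k) : (1:ℝ) / 3 ^ (k+1) ≤ |cv a - cv b| := by
  wlog h : a k < b k generalizing a b
  · rw [abs_sub_comm]
    exact this b a hb ha (fun i hi => (hlt i hi).symm) hk.symm (by omega)
  have e : T b (k+1) = T a (k+1) + 2 := by
    simp only [T]; rw [T_congr a b k hlt]
    rcases ha k with h1 | h1 <;> rcases hb k with h2 | h2 <;> omega
  have h1 := (cv_bounds a ha (k+1)).2
  have h2 := (cv_bounds b hb (k+1)).1
  rw [e] at h2; push_cast at h2
  rw [abs_sub_comm]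
  refine le_trans ?_ (le_abs_self _)
  have : ((T a (k+1) : ℝ) + 2) / 3 ^ (k+1) - (T a (k+1) + 1) / 3 ^ (k+1) = 1 / 3 ^ (k+1) := by
    rw [← sub_div]; ring_nf
  linarith

lemma cv_inj (a b : ℕ → ℕ) (ha : ∀ i, a i = 0 ∨ a i = 2) (hb : ∀ i, b i = 0 ∨ b i = 2)
    (h : cv a = cv b) : a = b := by
  by_contra hne
  have hex : ∃ k, a k ≠ b k := Function.ne_iff.1 hne
  classical
  have := cv_sep a b ha hb (Nat.find hex)
    (fun i hi => not_not.1 (Nat.find_min hex hi)) (Nat.find_spec hex)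
  rw [h, sub_self, abs_zero] at this
  have : (0:ℝ) < 1 / 3 ^ (Nat.find hex + 1) := by positivity
  linarith

lemma cv_mem (a : ℕ → ℕ) (ha : ∀ i, a i = 0 ∨ a i = 2) : cv a ∈ ternaryCantorSet :=
  ⟨fun n => a n, fun n => by rcases ha n with h | h <;> simp [h], rfl⟩

/-- Hölder argument: lower bound on measure. -/
lemma holder_pos (β θ : ℝ) (hβ : 0 < β) (hθ : 0 < θ) (h3 : (3:ℝ) ^ β = (2:ℝ) ^ θ)
    (P : ℕ → Prop) [DecidablePred P] (hP : ∀ k, Nat.count P k = ⌈θ * k⌉₊) (r : ℝ) (E : Set ℝ)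
    (hE : ∀ ω : ℕ → ℕ, (∀ i, ω i = 0 ∨ ω i = 2) →
      ∃ a : ℕ → ℕ, (∀ i, a i = 0 ∨ a i = 2) ∧ (∀ i, P i → a i = ω i) ∧ cv a + r ∈ E) :
    0 < μH[β] E := by
  classical
  have hinf : (Set.ofPred P).Infinite := by
    intro hf
    have : ∀ n, Nat.count P n ≤ hf.toFinset.card := fun n => Nat.count_le_card hf n
    obtain ⟨k, hk⟩ := exists_nat_gt ((hf.toFinset.card : ℝ) / θ)
    have h1 := this k
    rw [hP] at h1
    have h2 := Nat.le_ceil (θ * k)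
    rw [div_lt_iff₀ hθ] at hk
    have : (⌈θ * k⌉₊ : ℝ) ≤ hf.toFinset.card := by exact_mod_cast h1
    linarith
  let G : (ℕ → ℕ) → ℝ := fun a =>
    Real.ofDigits (fun j => if a (Nat.nth P j) = 0 then (0 : Fin 2) else 1)
  let E' : Set ℝ := {x | x ∈ E ∧ ∃ a : ℕ → ℕ, (∀ i, a i = 0 ∨ a i = 2) ∧ cv a + r = x}
  let dg : ℝ → ℕ → ℕ := fun x => if h : ∃ a : ℕ → ℕ, (∀ i, a i = 0 ∨ a i = 2) ∧ cv a + r = x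
    then h.choose else fun _ => 0
  have hdg : ∀ x ∈ E', (∀ i, dg x i = 0 ∨ dg x i = 2) ∧ cv (dg x) + r = x := by
    intro x hx
    have := hx.2.choose_spec
    simp only [dg]
    rw [dif_pos hx.2]
    exact this
  let g : ℝ → ℝ := fun x => G (dg x)
  have hH : HolderOnWith (Real.toNNReal ((3:ℝ) ^ β)) (Real.toNNReal β) g E' := by
    intro x hx y hy
    obtain ⟨ha, hxa⟩ := hdg x hx
    obtain ⟨hb, hyb⟩ := hdg y hy
    by_cases hne : dg x = dg y
    · have : g x = g y := by simp only [g, hne]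
      rw [this]; simp
    have hex : ∃ k, dg x k ≠ dg y k := Function.ne_iff.1 hne
    set k := Nat.find hex
    have hlt : ∀ i < k, dg x i = dg y i := fun i hi => not_not.1 (Nat.find_min hex hi)
    have hsep := cv_sep _ _ ha hb k hlt (Nat.find_spec hex)
    have hG : |g x - g y| ≤ (((2:ℕ):ℝ) ^ (Nat.count P k))⁻¹ := by
      apply Real.abs_ofDigits_sub_ofDigits_le
      intro j hj
      rw [hlt _ (Nat.nth_lt_of_lt_count hj)]
    have hdist : |cv (dg x) - cv (dg y)| = dist x y := by
      rw [Real.dist_eq, ← hxa, ← hyb, hxa, hyb]; congr 1; linarith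
    have hmain : dist (g x) (g y) ≤ (3:ℝ) ^ β * dist x y ^ β := by
      rw [Real.dist_eq (g x)]
      refine hG.trans ?_
      have s1 : (2:ℝ) ^ (θ * k) ≤ (2:ℝ) ^ (Nat.count P k) := by
        rw [← Real.rpow_natCast]
        apply Real.rpow_le_rpow_of_exponent_le (by norm_num)
        rw [hP]; exact Nat.le_ceil _
      have s2 : ((2:ℝ) ^ (θ * k))⁻¹ = (3:ℝ) ^ β * ((1:ℝ) / 3 ^ (k+1)) ^ β := by
        rw [Real.rpow_mul (by norm_num), ← h3, ← Real.mul_rpow (by norm_num) (by positivity),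
          Real.rpow_natCast, ← Real.rpow_natCast ((3:ℝ) ^ β), ← Real.rpow_mul (by norm_num),
          mul_comm β, Real.rpow_mul (by norm_num), Real.rpow_natCast,
          ← Real.inv_rpow (by positivity)]
        congr 1; rw [pow_succ]; field_simp
      calc (((2:ℕ):ℝ) ^ (Nat.count P k))⁻¹ ≤ ((2:ℝ) ^ (θ * k))⁻¹ := by
            push_cast; gcongr
        _ = (3:ℝ) ^ β * ((1:ℝ) / 3 ^ (k+1)) ^ β := s2
        _ ≤ _ := by
          rw [← hdist]; gcongr
    rw [edist_dist, edist_dist, Real.coe_toNNReal β hβ.le,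
      ENNReal.ofReal_rpow_of_nonneg dist_nonneg hβ.le]
    change _ ≤ ENNReal.ofReal ((3:ℝ) ^ β) * _
    rw [← ENNReal.ofReal_mul (by positivity)]
    exact ENNReal.ofReal_le_ofReal hmain
  have hsurj : Set.Ico (0:ℝ) 1 ⊆ g '' E' := by
    intro t ht
    let ω : ℕ → ℕ := fun i => 2 * (Real.digits t 2 (Nat.count P i) : ℕ)
    have hω : ∀ i, ω i = 0 ∨ ω i = 2 := by
      intro i
      have := (Real.digits t 2 (Nat.count P i)).isLt
      simp only [ω]; omega
    obtain ⟨a, ha, haω, haE⟩ := hE ω hω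
    have hmem : cv a + r ∈ E' := ⟨haE, a, ha, rfl⟩
    refine ⟨cv a + r, hmem, ?_⟩
    obtain ⟨h1, h2⟩ := hdg _ hmem
    have h4 : dg (cv a + r) = a := cv_inj _ _ h1 ha (by linarith)
    simp only [g, h4, G]
    rw [← Real.ofDigits_digits (b := 2) (by norm_num) ht]
    congr 1
    ext j
    rw [haω _ (Nat.nth_mem_of_infinite hinf j)]
    simp only [ω, Nat.count_nth_of_infinite hinf]
    generalize Real.digits t 2 j = z
    fin_cases z <;> simp
  have hle := hH.hausdorffMeasure_image_le (Real.toNNReal_pos.2 hβ) (d := 1) zero_le_one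
  have hv : (1:ENNReal) ≤ μH[1] (g '' E') := by
    rw [MeasureTheory.hausdorffMeasure_real]
    calc (1:ENNReal) = volume (Set.Ico (0:ℝ) 1) := by simp
      _ ≤ _ := measure_mono hsurj
  have hpos : 0 < μH[β] E' := by
    rw [pos_iff_ne_zero]
    intro h0
    rw [Real.coe_toNNReal β hβ.le, mul_one, h0, mul_zero] at hle
    exact absurd (hv.trans hle) (by simp)
  exact hpos.trans_le (measure_mono fun x hx => hx.1)

def NN : ℕ → ℕ
  | 0 => 0
  | (M+1) => NN M + (M+1)

lemma NN_mono : Monotone NN := monotone_nat_of_le_succ fun M => by simp [NN]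

lemma le_NN (M : ℕ) : M ≤ NN M := by
  cases M with
  | zero => simp
  | succ M => simp [NN]

def S (D : ℕ → Finset ℕ) : ℕ → Finset ℕ
  | 0 => {0, 1}
  | (M+1) => (S D M ×ˢ D M).image (fun p => 3 ^ (M+1) * p.1 + p.2)

def FF (D : ℕ → Finset ℕ) : Set ℝ :=
  ⋂ M, ⋃ x ∈ S D M, Set.Icc ((x : ℝ) / 3 ^ NN M) ((x + 2) / 3 ^ NN M)

lemma FF_closed (D : ℕ → Finset ℕ) : IsClosed (FF D) := by
  apply isClosed_iInter
  intro M
  exact isClosed_biUnion_finset fun x _ => isClosed_Icc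

lemma FF_dim (D : ℕ → Finset ℕ) (α : ℝ)
    (hD : ∀ M, ((D M).card : ℝ) ≤ 14 * (((M+1 : ℕ) : ℝ) + 1) * ((3:ℝ) ^ α) ^ (M+1)) :
    dimH (FF D) ≤ ENNReal.ofReal α := by
  apply dimH_le
  intro d hd
  by_contra hcon
  have hαd : α < d := by
    by_contra hle
    push Not at hle
    apply hcon
    rw [← ENNReal.ofReal_coe_nnreal]
    exact ENNReal.ofReal_le_ofReal hle
  have hd0 : (0:ℝ) ≤ d := d.2
  let A : ℕ → ℝ := fun M => (S D M).card * (((3:ℝ) ^ NN M)⁻¹) ^ (d:ℝ)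
  set ρ : ℝ := (3:ℝ) ^ (α - d) with hρ
  have hρ0 : 0 < ρ := by positivity
  have hρ1 : ρ < 1 := Real.rpow_lt_one_of_one_lt_of_neg (by norm_num) (by linarith)
  have hstep : ∀ M, A (M+1) ≤ A M * (14 * (((M+1 : ℕ) : ℝ) + 1) * ρ ^ (M+1)) := by
    intro M
    have c1 : (S D (M+1)).card ≤ (S D M).card * (D M).card := by
      simp only [S]
      refine Finset.card_image_le.trans ?_
      rw [Finset.card_product]
    have c1' : ((S D (M+1)).card : ℝ) ≤ (S D M).card * (D M).card := by exact_mod_cast c1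
    have e1 : (((3:ℝ) ^ NN (M+1))⁻¹) ^ (d:ℝ)
        = (((3:ℝ) ^ NN M)⁻¹) ^ (d:ℝ) * ((((3:ℝ)) ^ (M+1))⁻¹) ^ (d:ℝ) := by
      rw [← Real.mul_rpow (by positivity) (by positivity), ← mul_inv, ← pow_add]
      rfl
    have e2 : ((3:ℝ) ^ α) ^ (M+1) * ((((3:ℝ)) ^ (M+1))⁻¹) ^ (d:ℝ) = ρ ^ (M+1) := by
      rw [hρ, Real.rpow_sub (by norm_num), div_pow, div_eq_mul_inv]
      congr 1
      rw [Real.inv_rpow (by positivity), ← Real.rpow_natCast, ← Real.rpow_natCast,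
        ← Real.rpow_mul (by norm_num), ← Real.rpow_mul (by norm_num), mul_comm]
    simp only [A]
    calc ((S D (M+1)).card : ℝ) * (((3:ℝ) ^ NN (M+1))⁻¹) ^ (d:ℝ)
        ≤ ((S D M).card * (14 * (((M+1 : ℕ) : ℝ) + 1) * ((3:ℝ) ^ α) ^ (M+1))) *
          (((3:ℝ) ^ NN (M+1))⁻¹) ^ (d:ℝ) := by
          gcongr
          refine c1'.trans ?_
          gcongr
          exact hD M
      _ = _ := by rw [e1, ← e2]; ring
  have hev : ∀ᶠ M : ℕ in Filter.atTop, 14 * (((M+1 : ℕ) : ℝ) + 1) * ρ ^ (M+1) ≤ 1 := by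
    have t1 := tendsto_self_mul_const_pow_of_lt_one hρ0.le hρ1
    have t2 := tendsto_pow_atTop_nhds_zero_of_lt_one hρ0.le hρ1
    have t3 := ((t1.add t2).const_mul 14).comp (Filter.tendsto_add_atTop_nat 1)
    have t4 : ∀ᶠ M : ℕ in Filter.atTop, _ < (1:ℝ) := t3.eventually_lt_const (by norm_num)
    filter_upwards [t4] with M hM
    simp only [Function.comp] at hM
    have : 14 * (((M+1 : ℕ) : ℝ) + 1) * ρ ^ (M+1)
      = 14 * (((M+1 : ℕ) : ℝ) * ρ ^ (M+1) + ρ ^ (M+1)) := by ring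
    rw [this]; exact hM.le
  obtain ⟨M0, hM0⟩ := Filter.eventually_atTop.1 hev
  have hA0 : ∀ M, 0 ≤ A M := fun M => by positivity
  have hAle : ∀ M, M0 ≤ M → A M ≤ A M0 := by
    intro M hM
    induction M, hM using Nat.le_induction with
    | base => exact le_rfl
    | succ M hM ih =>
      refine (hstep M).trans (le_trans ?_ ih)
      exact mul_le_of_le_one_right (hA0 M) (hM0 M hM)
  have hdiam : ∀ (M : ℕ) (x : ℕ), Metric.ediam (Set.Icc ((x : ℝ) / 3 ^ NN M) ((x + 2) / 3 ^ NN M))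
      = ENNReal.ofReal (2 * ((3:ℝ) ^ NN M)⁻¹) := by
    intro M x
    rw [Real.ediam_Icc, ← sub_div]
    congr 1; ring
  have hle := Measure.hausdorffMeasure_le_liminf_sum (X := ℝ) (ι := fun M => {x // x ∈ S D M}) (d:ℝ) (FF D)
    (l := Filter.atTop) (fun M => ENNReal.ofReal (2 * ((3:ℝ) ^ NN M)⁻¹)) (by
      have : Filter.Tendsto (fun M => 2 * ((3:ℝ) ^ NN M)⁻¹) Filter.atTop (nhds (2 * 0)) := by
        apply Filter.Tendsto.const_mul
        apply Filter.Tendsto.inv_tendsto_atTop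
        apply (tendsto_pow_atTop_atTop_of_one_lt (by norm_num : (1:ℝ) < 3)).comp
        exact Filter.tendsto_atTop_mono le_NN Filter.tendsto_id
      have := ENNReal.tendsto_ofReal this
      simpa using this)
    (fun M x => Set.Icc ((x.1 : ℝ) / 3 ^ NN M) ((x.1 + 2) / 3 ^ NN M))
    (Filter.Eventually.of_forall fun M x => (hdiam M x.1).le)
    (Filter.Eventually.of_forall fun M y hy => by
      have := Set.mem_iInter.1 hy M
      simp only [Set.mem_iUnion] at this ⊢
      obtain ⟨x, hx, h⟩ := this
      exact ⟨⟨x, hx⟩, h⟩)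
  have hfin : Filter.liminf (fun M => ∑ x : {x // x ∈ S D M},
      Metric.ediam (Set.Icc ((x.1 : ℝ) / 3 ^ NN M) ((x.1 + 2) / 3 ^ NN M)) ^ (d:ℝ)) Filter.atTop
      ≤ ENNReal.ofReal (2 ^ (d:ℝ) * A M0) := by
    refine (Filter.liminf_le_liminf (v := fun _ => ENNReal.ofReal (2 ^ (d:ℝ) * A M0)) ?_).trans
      (by simp)
    filter_upwards [Filter.eventually_ge_atTop M0] with M hM
    simp only [hdiam, Finset.sum_const, Finset.card_univ, Fintype.card_coe, nsmul_eq_mul]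
    rw [ENNReal.ofReal_rpow_of_nonneg (by positivity) hd0, ← ENNReal.ofReal_natCast,
      ← ENNReal.ofReal_mul (by positivity)]
    apply ENNReal.ofReal_le_ofReal
    rw [Real.mul_rpow (by norm_num) (by positivity)]
    have := hAle M hM
    calc _ = 2 ^ (d:ℝ) * A M := by simp only [A]; ring
      _ ≤ _ := by gcongr
  have := hle.trans hfin
  rw [hd] at this
  exact absurd this (by simp)

lemma FF_hit (D : ℕ → Finset ℕ) (P : ℕ → Prop) [DecidablePred P]
    (hD : ∀ M, ∀ k < 2 * 3 ^ (M+1), ∃ w : ℕ → ℕ, (∀ i, w i = 0 ∨ w i = 2) ∧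
        (∀ i, P (NN M + i) → w i = 0) ∧ k + T w (M+1) ∈ D M)
    (r : ℝ) (hr : r ∈ Set.Icc (0:ℝ) 1) (ω : ℕ → ℕ) (hω : ∀ i, ω i = 0 ∨ ω i = 2) :
    ∃ a : ℕ → ℕ, (∀ i, a i = 0 ∨ a i = 2) ∧ (∀ i, P i → a i = ω i) ∧ cv a + r ∈ FF D := by
  let k : ℕ → ℕ := fun M => ⌊(3:ℝ) ^ NN M * r⌋₊
  let b : ℕ → ℕ → ℕ := fun M i => if P (NN M + i) then ω (NN M + i) else 0
  have hu : ∀ M, T (b M) (M+1) < 3 ^ (M+1) := fun M => T_lt _ (fun i => by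
    simp only [b]; split_ifs
    · rcases hω (NN M + i) with h | h <;> omega
    · omega) _
  have hκ : ∀ M, k (M+1) % 3 ^ (M+1) < 3 ^ (M+1) := fun M => Nat.mod_lt _ (by positivity)
  choose w w1 w2 w3 using fun M => hD M (k (M+1) % 3 ^ (M+1) + T (b M) (M+1))
    (by have := hu M; have := hκ M; omega)
  let blk : ℕ → ℕ := fun i => Nat.findGreatest (fun M => NN M ≤ i) i
  have hblk : ∀ M i, i < M + 1 → blk (NN M + i) = M := by
    intro M i hi
    simp only [blk]
    rw [Nat.findGreatest_eq_iff]
    refine ⟨(le_NN M).trans (by omega), fun _ => by omega, fun n hn _ => ?_⟩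
    have : NN (M+1) ≤ NN n := NN_mono hn
    simp only [NN] at this
    omega
  let a : ℕ → ℕ := fun i => if P i then ω i else w (blk i) (i - NN (blk i))
  have ha : ∀ i, a i = 0 ∨ a i = 2 := by
    intro i; simp only [a]; split_ifs
    · exact hω i
    · exact w1 _ _
  refine ⟨a, ha, fun i hi => by simp [a, hi], ?_⟩
  have hT : ∀ M, T (fun i => a (NN M + i)) (M+1) = T (b M) (M+1) + T (w M) (M+1) := by
    intro M
    rw [← T_sum]
    apply T_congr
    intro i hi
    by_cases hP : P (NN M + i)
    · simp [a, b, hP, w2 M i hP]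
    · simp [a, b, hP, hblk M i hi]
  have hk : ∀ M, k (M+1) / 3 ^ (M+1) = k M := by
    intro M
    simp only [k]
    have : ((3:ℝ) ^ NN M * r) = ((3:ℝ) ^ NN (M+1) * r) / ((3 ^ (M+1) : ℕ) : ℝ) := by
      simp only [NN, pow_add]; push_cast; field_simp
    rw [this, Nat.floor_div_natCast]
  have hmem : ∀ M, k M + T a (NN M) ∈ S D M := by
    intro M
    induction M with
    | zero =>
      have h1 : k 0 ≤ 1 := by
        simp only [k, NN, pow_zero, one_mul]
        exact Nat.floor_le_one_of_le_one hr.2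
      simp only [NN, T, S, Finset.mem_insert, Finset.mem_singleton]
      omega
    | succ M ih =>
      simp only [S, Finset.mem_image, Finset.mem_product, Prod.exists]
      refine ⟨_, _, ⟨ih, w3 M⟩, ?_⟩
      have e1 : T a (NN (M+1)) = 3 ^ (M+1) * T a (NN M) + (T (b M) (M+1) + T (w M) (M+1)) := by
        rw [← hT]; exact T_add a (NN M) (M+1)
      have e2 := Nat.div_add_mod (k (M+1)) (3 ^ (M+1))
      rw [hk] at e2
      rw [e1, mul_add]
      omega
  simp only [FF, Set.mem_iInter, Set.mem_iUnion]
  intro M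
  refine ⟨_, hmem M, ?_⟩
  obtain ⟨l1, l2⟩ := cv_bounds a ha (NN M)
  have h3 : (0:ℝ) < 3 ^ NN M := by positivity
  have f1 : (k M : ℝ) ≤ 3 ^ NN M * r := Nat.floor_le (mul_nonneg h3.le hr.1)
  have f2 : 3 ^ NN M * r < k M + 1 := Nat.lt_floor_add_one _
  rw [div_le_iff₀ h3] at l1
  rw [le_div_iff₀ h3] at l2
  push_cast
  constructor
  · rw [div_le_iff₀ h3]; linarith
  · rw [le_div_iff₀ h3]; linarith

end CantorTr

/-- Let `1 − log 2/log 3 ≤ α ≤ 1`.  There is a closed set `F ⊆ ℝ` with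
`dim_H F ≤ α` such that for every `r ∈ [0,1]`,
`ℋ^{α − 1 + log 2/log 3}((𝒞 + r) ∩ F) > 0`. -/
theorem exists_closed_lowDim_positive_measure_meeting_translates (α : ℝ)
    (hα₁ : 1 - Real.log 2 / Real.log 3 ≤ α) (hα₂ : α ≤ 1) :
    ∃ F : Set ℝ, IsClosed F ∧ dimH F ≤ ENNReal.ofReal α ∧
      ∀ r ∈ Set.Icc (0 : ℝ) 1,
        0 < μH[α - 1 + Real.log 2 / Real.log 3]
          (((· + r) '' ternaryCantorSet) ∩ F) := by
  have hl2 : 0 < Real.log 2 := Real.log_pos (by norm_num)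
  have hl3 : 0 < Real.log 3 := Real.log_pos (by norm_num)
  set s := Real.log 2 / Real.log 3 with hs
  have hs0 : 0 < s := div_pos hl2 hl3
  have h3s : (3:ℝ) ^ s = 2 := by
    rw [Real.rpow_def_of_pos (by norm_num), hs, mul_div_cancel₀ _ hl3.ne', Real.exp_log (by norm_num)]
  set θ := (α - 1 + s) / s with hθ
  have hθ0 : 0 ≤ θ := div_nonneg (by linarith) hs0.le
  have hθ1 : θ ≤ 1 := by rw [hθ, div_le_one hs0]; linarith
  have hsθ : s * θ = α - 1 + s := by rw [hθ]; field_simp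
  have h3β : (3:ℝ) ^ (α - 1 + s) = (2:ℝ) ^ θ := by
    rw [← h3s, ← Real.rpow_mul (by norm_num), hsθ]
  have h3α : (3:ℝ) ^ α = 3 * (2:ℝ) ^ (θ - 1) := by
    rw [← h3s, ← Real.rpow_mul (by norm_num), mul_sub, hsθ]
    nth_rewrite 2 [← Real.rpow_one 3]
    rw [← Real.rpow_add (by norm_num)]
    congr 1; ring
  obtain ⟨P, hdec, hP⟩ := CantorTr.exists_P θ hθ0 hθ1
  choose D hD1 hD2 using fun M : ℕ => CantorTr.block_D α θ hθ0 h3α P hP (CantorTr.NN M) (M+1)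
  refine ⟨CantorTr.FF D, CantorTr.FF_closed D, CantorTr.FF_dim D α hD1, fun r hr => ?_⟩
  have hE : ∀ ω : ℕ → ℕ, (∀ i, ω i = 0 ∨ ω i = 2) →
      ∃ a : ℕ → ℕ, (∀ i, a i = 0 ∨ a i = 2) ∧ (∀ i, P i → a i = ω i) ∧
        CantorTr.cv a + r ∈ ((· + r) '' ternaryCantorSet) ∩ CantorTr.FF D := by
    intro ω hω
    obtain ⟨a, h1, h2, h3⟩ := CantorTr.FF_hit D P hD2 r hr ω hω
    exact ⟨a, h1, h2, ⟨_, CantorTr.cv_mem a h1, rfl⟩, h3⟩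
  rcases hθ0.eq_or_lt with h0 | h0
  · have hβ : α - 1 + s = 0 := by rw [← hsθ, ← h0, mul_zero]
    rw [hβ]
    obtain ⟨a, _, _, h⟩ := hE (fun _ => 0) (by simp)
    exact lt_of_lt_of_le one_pos (Measure.one_le_hausdorffMeasure_zero_of_nonempty ⟨_, h⟩)
  · exact CantorTr.holder_pos (α - 1 + s) θ (by rw [← hsθ]; positivity) h0 h3β P hP r _ hE
end

section
/- Let α be a real number with 1 − log 2/log 3 ≤ α ≤ 1, and let E ⊆ ℝ be a set with Hausdorff dimension at most α. Then for Lebesgue-almost every x ∈ ℝ, the Hausdorff dimension of (𝒞 + x) ∩ E is at most α − 1 + log 2/log 3. -/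
open MeasureTheory

open Set Filter Topology MeasureTheory
open scoped ENNReal NNReal

lemma cantor_summable (a : ℕ → ℝ) (ha : ∀ n, a n = 0 ∨ a n = 2) :
    Summable (fun n : ℕ => a n / 3 ^ (n + 1)) := by
  have h : Summable (fun n : ℕ => (2/3 : ℝ) * (1/3 : ℝ) ^ n) :=
    (summable_geometric_of_lt_one (by norm_num) (by norm_num)).mul_left _
  refine Summable.of_nonneg_of_le (fun n => ?_) (fun n => ?_) h
  · rcases ha n with h | h <;> rw [h] <;> positivity
  · have e : (2/3 : ℝ) * (1/3 : ℝ) ^ n = 2 / 3 ^ (n+1) := by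
      rw [one_div, inv_pow, pow_succ]; field_simp
    rw [e]
    rcases ha n with h | h <;> rw [h]
    simp only [zero_div]; positivity

lemma cantor_split {x : ℝ} (hx : x ∈ ternaryCantorSet) :
    ∃ y ∈ ternaryCantorSet, x = y / 3 ∨ x = y / 3 + 2 / 3 := by
  obtain ⟨a, ha, rfl⟩ := hx
  refine ⟨_, ⟨fun n => a (n+1), fun n => ha (n+1), rfl⟩, ?_⟩
  rw [(cantor_summable a ha).tsum_eq_zero_add, ← tsum_div_const]
  have e : ∀ n : ℕ, a (n+1) / 3 ^ (n+1+1) = a (n+1) / 3 ^ (n+1) / 3 := fun n => by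
    rw [div_div, ← pow_succ]
  simp only [e]
  rcases ha 0 with h | h
  · left; rw [h]; simp
  · right; rw [h]; norm_num; ring

lemma cantor_unit {x : ℝ} (hx : x ∈ ternaryCantorSet) : x ∈ Icc (0:ℝ) 1 := by
  obtain ⟨a, ha, rfl⟩ := hx
  have h : HasSum (fun n : ℕ => (2/3 : ℝ) * (1/3 : ℝ) ^ n) ((2/3) * (1 - 1/3)⁻¹) :=
    (hasSum_geometric_of_lt_one (by norm_num) (by norm_num)).mul_left _
  constructor
  · refine tsum_nonneg fun n => ?_
    rcases ha n with h | h <;> rw [h] <;> positivity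
  · have := Summable.tsum_le_tsum (f := fun n : ℕ => a n / 3 ^ (n + 1)) (fun n => ?_)
      (cantor_summable a ha) h.summable
    · rw [h.tsum_eq] at this
      refine this.trans (by norm_num)
    · have e : (2/3 : ℝ) * (1/3 : ℝ) ^ n = 2 / 3 ^ (n+1) := by
        rw [one_div, inv_pow, pow_succ]; field_simp
      rw [e]
      rcases ha n with h | h <;> rw [h]
      simp only [zero_div]; positivity

lemma cantor_cover (n : ℕ) : ∃ F : Finset ℝ, F.card ≤ 2 ^ n ∧
    ∀ x ∈ ternaryCantorSet, ∃ c ∈ F, x ∈ Icc c (c + (1/3) ^ n) := by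
  classical
  induction n with
  | zero =>
    refine ⟨{0}, by simp, fun x hx => ⟨0, by simp, ?_⟩⟩
    simpa using cantor_unit hx
  | succ n ih =>
    obtain ⟨F, hF, h⟩ := ih
    refine ⟨F.image (fun c => c / 3) ∪ F.image (fun c => c / 3 + 2 / 3), ?_, fun x hx => ?_⟩
    · refine (Finset.card_union_le _ _).trans ?_
      have h1 := Finset.card_image_le (s := F) (f := fun c : ℝ => c / 3)
      have h2 := Finset.card_image_le (s := F) (f := fun c : ℝ => c / 3 + 2 / 3)
      rw [pow_succ]; omega
    · obtain ⟨y, hy, hxy⟩ := cantor_split hx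
      obtain ⟨c, hc, hyc⟩ := h y hy
      have := hyc.1
      have := hyc.2
      rcases hxy with rfl | rfl
      · refine ⟨c / 3, Finset.mem_union_left _ (Finset.mem_image_of_mem _ hc), ?_, ?_⟩
        · linarith
        · rw [pow_succ]; linarith
      · refine ⟨c / 3 + 2 / 3, Finset.mem_union_right _ (Finset.mem_image_of_mem (fun c : ℝ => c / 3 + 2 / 3) hc), ?_, ?_⟩
        · linarith
        · rw [pow_succ]; linarith

/-- translates hitting a set -/
def hitSet (U : Set ℝ) : Set ℝ := {x | ((· + x) '' ternaryCantorSet ∩ U).Nonempty}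

lemma volume_hitSet_le (U : Set ℝ) (n : ℕ) :
    volume (hitSet U) ≤ 2 ^ n * (ENNReal.ofReal ((1/3) ^ n) + Metric.ediam U) := by
  obtain ⟨F, hF, h⟩ := cantor_cover n
  have hsub : hitSet U ⊆ ⋃ c ∈ F, {x | ∃ u ∈ U, ∃ y ∈ Icc c (c + (1/3) ^ n), x = u - y} := by
    rintro x ⟨u, ⟨y, hy, hyu⟩, hu⟩
    obtain ⟨c, hc, hyc⟩ := h y hy
    simp only [mem_iUnion]
    exact ⟨c, hc, u, hu, y, hyc, by simp only at hyu; linarith⟩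
  refine (measure_mono hsub).trans ((measure_biUnion_finset_le _ _).trans ?_)
  have hb : ∀ c ∈ F, volume {x | ∃ u ∈ U, ∃ y ∈ Icc c (c + (1/3) ^ n), x = u - y} ≤
      ENNReal.ofReal ((1/3) ^ n) + Metric.ediam U := by
    intro c _
    refine (Real.volume_le_diam _).trans (Metric.ediam_le ?_)
    rintro _ ⟨u, hu, y, hy, rfl⟩ _ ⟨v, hv, z, hz, rfl⟩
    have h1 : edist (u - y) (v - z) ≤ edist y z + edist u v := by
      rw [edist_dist, edist_dist, edist_dist, ← ENNReal.ofReal_add dist_nonneg dist_nonneg]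
      apply ENNReal.ofReal_le_ofReal
      rw [add_comm]
      exact dist_sub_sub_le _ _ _ _
    refine h1.trans (add_le_add ?_ (Metric.edist_le_ediam_of_mem hu hv))
    rw [edist_dist]
    apply ENNReal.ofReal_le_ofReal
    have := Real.dist_le_of_mem_Icc hy hz
    linarith
  refine (Finset.sum_le_sum hb).trans ?_
  rw [Finset.sum_const, nsmul_eq_mul]
  gcongr
  exact_mod_cast hF

lemma real_bound {d : ℝ} (hd : 0 < d) (hd1 : d ≤ 1) :
    ∃ n : ℕ, 2 ^ n * ((1/3) ^ n + d) ≤ 6 * d ^ (1 - Real.log 2 / Real.log 3) := by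
  obtain ⟨n, hn1, hn2⟩ := exists_nat_pow_near_of_lt_one hd hd1 (by norm_num : (0:ℝ) < 1/3) (by norm_num)
  refine ⟨n, ?_⟩
  set γ := Real.log 2 / Real.log 3 with hγ
  have l3 : 0 < Real.log 3 := Real.log_pos (by norm_num)
  have l2 : 0 < Real.log 2 := Real.log_pos (by norm_num)
  have hγ1 : γ ≤ 1 := by
    rw [hγ, div_le_one l3]; exact Real.log_le_log (by norm_num) (by norm_num)
  have hγ0 : 0 < γ := div_pos l2 l3
  have e3 : (1/3 : ℝ) ^ (1 - γ) = 2 / 3 := by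
    rw [Real.rpow_def_of_pos (by norm_num), one_div, Real.log_inv]
    have : -Real.log 3 * (1 - γ) = Real.log 2 - Real.log 3 := by
      rw [hγ]; field_simp; ring
    rw [this, Real.exp_sub, Real.exp_log (by norm_num), Real.exp_log (by norm_num)]
  have e : (2:ℝ) ^ n * (1/3) ^ n = ((1/3 : ℝ) ^ n) ^ (1 - γ) := by
    rw [← Real.rpow_natCast (1/3 : ℝ) n, ← Real.rpow_mul (by norm_num), mul_comm (n:ℝ),
      Real.rpow_mul (by norm_num), e3, Real.rpow_natCast, Real.rpow_natCast, ← mul_pow]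
    norm_num
  have b1 : ((1/3 : ℝ) ^ n) ^ (1 - γ) ≤ (3 * d) ^ (1 - γ) := by
    apply Real.rpow_le_rpow (by positivity) _ (by linarith)
    rw [pow_succ] at hn1; linarith
  have b2 : (3 * d) ^ (1 - γ) ≤ 3 * d ^ (1 - γ) := by
    rw [Real.mul_rpow (by norm_num) hd.le]
    gcongr
    calc (3:ℝ) ^ (1 - γ) ≤ 3 ^ (1:ℝ) := Real.rpow_le_rpow_of_exponent_le (by norm_num) (by linarith)
      _ = 3 := Real.rpow_one _
  calc (2:ℝ) ^ n * ((1/3) ^ n + d) ≤ 2 ^ n * ((1/3) ^ n + (1/3) ^ n) := by gcongr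
    _ = 2 * (2 ^ n * (1/3) ^ n) := by ring
    _ ≤ _ := by rw [e]; linarith

lemma volume_hitSet_le' (U : Set ℝ) (hU : Metric.ediam U ≤ 1) :
    volume (hitSet U) ≤ 6 * Metric.ediam U ^ (1 - Real.log 2 / Real.log 3) := by
  have hfin : Metric.ediam U ≠ ∞ := ne_top_of_le_ne_top ENNReal.one_ne_top hU
  have key : ∀ n : ℕ, volume (hitSet U) ≤ ENNReal.ofReal (2 ^ n * ((1/3) ^ n + (Metric.ediam U).toReal)) := by
    intro n
    refine (volume_hitSet_le U n).trans (le_of_eq ?_)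
    rw [ENNReal.ofReal_mul (by positivity), ENNReal.ofReal_add (by positivity) (by positivity),
      ENNReal.ofReal_toReal hfin, ENNReal.ofReal_pow (p := 2) (by norm_num), ENNReal.ofReal_ofNat]
  rcases eq_or_ne (Metric.ediam U) 0 with h0 | h0
  · have ht : Tendsto (fun n : ℕ => ENNReal.ofReal (2 ^ n * ((1/3) ^ n + (Metric.ediam U).toReal))) atTop (𝓝 0) := by
      have : Tendsto (fun n : ℕ => (2/3 : ℝ) ^ n) atTop (𝓝 0) :=
        tendsto_pow_atTop_nhds_zero_of_lt_one (by norm_num) (by norm_num)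
      have h2 := ENNReal.tendsto_ofReal this
      rw [ENNReal.ofReal_zero] at h2
      refine h2.congr fun n => ?_
      rw [h0, ENNReal.toReal_zero, add_zero, ← mul_pow]
      norm_num
    exact (ge_of_tendsto' ht key).trans (bot_le)
  · have hpos : 0 < (Metric.ediam U).toReal := ENNReal.toReal_pos h0 hfin
    obtain ⟨n, hn⟩ := real_bound hpos (by
      simpa using ENNReal.toReal_mono ENNReal.one_ne_top hU)
    refine (key n).trans ((ENNReal.ofReal_le_ofReal hn).trans (le_of_eq ?_))
    rw [ENNReal.ofReal_mul (by norm_num), ENNReal.ofReal_ofNat, ← ENNReal.ofReal_rpow_of_pos hpos,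
      ENNReal.ofReal_toReal hfin]

lemma exists_cover (t : ℝ) (E : Set ℝ) (h : μH[t] E = 0) (ht : 0 < t) (r ε : ℝ≥0∞)
    (hr : 0 < r) (hε : 0 < ε) :
    ∃ U : ℕ → Set ℝ, E ⊆ ⋃ i, U i ∧ (∀ i, Metric.ediam (U i) ≤ r) ∧
      ∑' i, Metric.ediam (U i) ^ t < ε := by
  rw [Measure.hausdorffMeasure_apply] at h
  have h1 := (iSup₂_le_iff.1 h.le) r hr
  have h2 := lt_of_le_of_lt h1 hε
  simp only [iInf_lt_iff] at h2
  obtain ⟨U, hU, hd, hs⟩ := h2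
  refine ⟨U, hU, hd, lt_of_le_of_lt (ENNReal.tsum_le_tsum fun i => ?_) hs⟩
  rcases (U i).eq_empty_or_nonempty with he | hne
  · simp [he, ENNReal.zero_rpow_of_pos ht]
  · exact le_iSup_of_le hne le_rfl

lemma ae_null (s t : ℝ) (hs : 0 < s) (hst : t = s + (1 - Real.log 2 / Real.log 3))
    (E : Set ℝ) (hE : μH[t] E = 0) :
    ∀ᵐ x : ℝ, μH[s] (((· + x) '' ternaryCantorSet) ∩ E) = 0 := by
  have hγ1 : 0 ≤ 1 - Real.log 2 / Real.log 3 := by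
    rw [sub_nonneg, div_le_one (Real.log_pos (by norm_num))]
    exact Real.log_le_log (by norm_num) (by norm_num)
  have ht : 0 < t := by linarith
  have hpow : ∀ k : ℕ, (0 : ℝ≥0∞) < (1/2) ^ k := fun k =>
    ENNReal.pow_pos (by simp) k
  choose U hU hUd hUs using fun k : ℕ => exists_cover t E hE ht ((1/2) ^ k) ((1/2) ^ k) (hpow k) (hpow k)
  set V : ℕ → ℕ → Set ℝ := fun k i => toMeasurable volume (hitSet (U k i)) with hV
  have hVm : ∀ k i, MeasurableSet (V k i) := fun k i => measurableSet_toMeasurable _ _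
  set f : ℕ → ℝ → ℝ≥0∞ := fun k x => ∑' i, (V k i).indicator (fun _ => Metric.ediam (U k i) ^ s) x with hf
  have hfm : ∀ k, Measurable (f k) := fun k =>
    Measurable.tsum fun i => measurable_const.indicator (hVm k i)
  have hle1 : ∀ k : ℕ, ((1/2 : ℝ≥0∞)) ^ k ≤ 1 := fun k => pow_le_one' (by simp) k
  have hint : ∀ k, ∫⁻ x, f k x ≤ 6 * (1/2) ^ k := by
    intro k
    rw [hf]
    simp only
    rw [lintegral_tsum fun i => (measurable_const.indicator (hVm k i)).aemeasurable]
    have : ∀ i, ∫⁻ x, (V k i).indicator (fun _ => Metric.ediam (U k i) ^ s) x ≤ 6 * Metric.ediam (U k i) ^ t := by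
      intro i
      rw [lintegral_indicator_const (hVm k i), measure_toMeasurable]
      refine (mul_le_mul_right (volume_hitSet_le' (U k i) ((hUd k i).trans (hle1 k))) _).trans (le_of_eq ?_)
      rw [hst, ENNReal.rpow_add_of_nonneg _ _ hs.le hγ1]
      ring
    refine (ENNReal.tsum_le_tsum this).trans ?_
    rw [ENNReal.tsum_mul_left]
    gcongr
    exact (hUs k).le
  have hsum : ∫⁻ x, ∑' k, f k x ≠ ∞ := by
    rw [lintegral_tsum fun k => (hfm k).aemeasurable]
    refine ne_top_of_le_ne_top ?_ (ENNReal.tsum_le_tsum hint)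
    rw [ENNReal.tsum_mul_left, ENNReal.tsum_geometric]
    refine ENNReal.mul_ne_top (by simp) ?_
    simp
  filter_upwards [ae_lt_top (Measurable.tsum hfm) hsum] with x hx
  have hlim : Tendsto (fun k => f k x) atTop (𝓝 0) :=
    ENNReal.tendsto_atTop_zero_of_tsum_ne_top hx.ne
  have hr : Tendsto (fun k : ℕ => (1/2 : ℝ≥0∞) ^ k) atTop (𝓝 0) :=
    ENNReal.tendsto_pow_atTop_nhds_zero_of_lt_one (by simp)
  have hmain := Measure.hausdorffMeasure_le_liminf_tsum (l := atTop) s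
    (((· + x) '' ternaryCantorSet) ∩ E) (fun k : ℕ => (1/2 : ℝ≥0∞) ^ k) hr
    (fun k i => ((· + x) '' ternaryCantorSet) ∩ U k i)
    (Eventually.of_forall fun k i => (Metric.ediam_mono inter_subset_right).trans (hUd k i))
    (Eventually.of_forall fun k y hy => by
      obtain ⟨i, hi⟩ := mem_iUnion.1 (hU k hy.2)
      exact mem_iUnion.2 ⟨i, hy.1, hi⟩)
  refine le_antisymm (hmain.trans ?_) (bot_le)
  rw [← hlim.liminf_eq]
  refine liminf_le_liminf (Eventually.of_forall fun k => ENNReal.tsum_le_tsum fun i => ?_)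
  rcases (((· + x) '' ternaryCantorSet) ∩ U k i).eq_empty_or_nonempty with he | hne
  · rw [he]; simp [ENNReal.zero_rpow_of_pos hs]
  · have hm : x ∈ V k i := subset_toMeasurable _ _ (show x ∈ hitSet (U k i) from hne)
    rw [indicator_of_mem hm]
    exact ENNReal.rpow_le_rpow (Metric.ediam_mono inter_subset_right) hs.le

/-- Let `1 − log 2/log 3 ≤ α ≤ 1` and let `E ⊆ ℝ` with `dim_H E ≤ α`.  Then
for Lebesgue-a.e. `x ∈ ℝ`, `dim_H ((𝒞 + x) ∩ E) ≤ α − 1 + log 2/log 3`. -/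
theorem dimH_translate_inter_le_ae (α : ℝ)
    (hα₁ : 1 - Real.log 2 / Real.log 3 ≤ α) (hα₂ : α ≤ 1)
    (E : Set ℝ) (hE : dimH E ≤ ENNReal.ofReal α) :
    ∀ᵐ x : ℝ,
      dimH (((· + x) '' ternaryCantorSet) ∩ E) ≤
        ENNReal.ofReal (α - 1 + Real.log 2 / Real.log 3) := by
  set β := α - 1 + Real.log 2 / Real.log 3 with hβ
  have hβ0 : 0 ≤ β := by linarith
  have hγ1 : 0 ≤ 1 - Real.log 2 / Real.log 3 := by
    rw [sub_nonneg, div_le_one (Real.log_pos (by norm_num))]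
    exact Real.log_le_log (by norm_num) (by norm_num)
  have key : ∀ n : ℕ, ∀ᵐ x : ℝ,
      μH[β + 1 / ((n:ℝ) + 1)] (((· + x) '' ternaryCantorSet) ∩ E) = 0 := by
    intro n
    have hn : (0:ℝ) < 1 / ((n:ℝ) + 1) := by positivity
    refine ae_null _ (α + 1 / ((n:ℝ) + 1)) (by linarith) (by rw [hβ]; ring) E ?_
    have hnn : 0 ≤ α + 1 / ((n:ℝ) + 1) := by linarith
    have := hausdorffMeasure_of_dimH_lt (s := E) (d := (α + 1 / ((n:ℝ) + 1)).toNNReal) (by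
      refine lt_of_le_of_lt hE ?_
      change ENNReal.ofReal α < ENNReal.ofReal _
      exact (ENNReal.ofReal_lt_ofReal_iff (by linarith)).2 (by linarith))
    rwa [Real.coe_toNNReal _ hnn] at this
  filter_upwards [ae_all_iff.2 key] with x hx
  have hlim : Tendsto (fun n : ℕ => ENNReal.ofReal (β + 1 / ((n:ℝ) + 1))) atTop (𝓝 (ENNReal.ofReal β)) := by
    apply ENNReal.tendsto_ofReal
    simpa using (tendsto_one_div_add_atTop_nhds_zero_nat (𝕜 := ℝ)).const_add β
  refine ge_of_tendsto' hlim fun n => ?_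
  have hn : (0:ℝ) < 1 / ((n:ℝ) + 1) := by positivity
  refine dimH_le_of_hausdorffMeasure_ne_top (d := (β + 1 / ((n:ℝ) + 1)).toNNReal) ?_
  rw [Real.coe_toNNReal _ (by linarith), hx n]
  simp
end
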